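/- In $\Lambda_\oplus$ with call-by-value evaluation, let $M=\lambda x.\lambda y.(\Omega\oplus I)$ and $N=\lambda x.((\lambda y.\Omega)\oplus(\lambda y.I))$, and $L=\lambda y.(\Omega\oplus I)$, $L_0=\lambda y.\Omega$, $L_1=\lambda y.I$. Suppose $P$ is a term and $P[M/x, L/\bar y]$ converges with probability $p$ (where $\bar y = y_1,\dots,y_n$ and $L/\bar y$ substitutes $L$ for each $y_i$). Then for every bit-vector $b\in\{0,1\}^n$ there is $p_b$ such that $P[N/x, L_b/\bar y]$ converges with probability $p_b$, and $\sum_{b\in\{0,1\}^n} p_b/2^n \ge p$. In particular (case $n=0$), for every term $P$ with one free variable $x$, the convergence probability of $P[M/x]$ is at most that of $P[N/x]$. -/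

import Mathlib

open scoped ENNReal

namespace LamPlus

/-- Terms of the pure untyped probabilistic λ-calculus `Λ⊕` (de Bruijn). -/
inductive LTm : Type
  | var (n : ℕ)
  | lam (M : LTm)
  | app (M N : LTm)
  | choice (M N : LTm)
deriving DecidableEq

/-- Values of `Λ⊕` (call-by-value): abstractions. -/
inductive IsVal : LTm → Prop
  | lam (M) : IsVal (.lam M)

/-- Substitution of the closed term `s` for the variable `k`. -/
def subst : LTm → ℕ → LTm → LTm
  | .var n, k, s => if n = k then s else if k < n then .var (n - 1) else .var n
  | .lam M, k, s => .lam (subst M (k + 1) s)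
  | .app M N, k, s => .app (subst M k s) (subst N k s)
  | .choice M N, k, s => .choice (subst M k s) (subst N k s)

/-- Simultaneous substitution of a list of closed terms for variables `0, 1, …`. -/
def msubst : LTm → List LTm → LTm
  | M, [] => M
  | M, V :: vs => msubst (subst M 0 V) vs

/-- `P` has all its free variables below `k`. -/
def ClosedUnder : ℕ → LTm → Prop
  | k, .var n => n < k
  | k, .lam M => ClosedUnder (k + 1) M
  | k, .app M N => ClosedUnder k M ∧ ClosedUnder k N
  | k, .choice M N => ClosedUnder k M ∧ ClosedUnder k N

/-- One-step reduction of a closed term to a sequence of terms (probabilistic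
branching for `⊕`), closed under call-by-value evaluation contexts. -/
inductive Red : LTm → List LTm → Prop
  | beta {M V : LTm} : IsVal V → Red (.app (.lam M) V) [subst M 0 V]
  | choice (M N : LTm) : Red (.choice M N) [M, N]
  | appL {M : LTm} {Ns : List LTm} (L : LTm) : Red M Ns →
      Red (.app M L) (Ns.map fun N => .app N L)
  | appR {V M : LTm} {Ns : List LTm} : IsVal V → Red M Ns →
      Red (.app V M) (Ns.map fun N => .app V N)

/-- Small-step approximation semantics `M ⇒ 𝒟` of `Λ⊕`. -/
inductive SEval : LTm → (LTm → ℝ≥0∞) → Prop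
  | empty (M) : SEval M 0
  | val {V} : IsVal V → SEval V (fun W => if W = V then 1 else 0)
  | step {M : LTm} {Ns : List LTm} {D : ℕ → LTm → ℝ≥0∞} : Red M Ns →
      (∀ i : Fin Ns.length, SEval (Ns.get i) (D i)) →
      SEval M (fun b => (Ns.length : ℝ≥0∞)⁻¹ * ∑ i : Fin Ns.length, D i b)

/-- `M` converges with probability `p`: some approximation has total mass `p`. -/
def Conv (M : LTm) (p : ℝ≥0∞) : Prop := ∃ D, SEval M D ∧ (∑' V, D V) = p

/-- The identity `I = λx.x`. -/
def Idt : LTm := .lam (.var 0)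

/-- The diverging term `Ω = (λx.xx)(λx.xx)`. -/
def Om : LTm := .app (.lam (.app (.var 0) (.var 0))) (.lam (.app (.var 0) (.var 0)))

/-- `L₀ = λy.Ω`. -/
def L0 : LTm := .lam Om

/-- `L₁ = λy.I`. -/
def L1 : LTm := .lam Idt

/-- `L = λy.(Ω ⊕ I)`. -/
def Lt : LTm := .lam (.choice Om Idt)

/-- `M = λx.λy.(Ω ⊕ I)`. -/
def Mt : LTm := .lam (.lam (.choice Om Idt))

/-- `N = λx.((λy.Ω) ⊕ (λy.I))`. -/
def Nt : LTm := .lam (.choice (.lam Om) (.lam Idt))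

end LamPlus

namespace LamPlus

/-!
The left term `M` tosses its coin each time `L = M V` is called, the right term `N` tosses it once,
when `N V` is evaluated to one of `L₀`, `L₁`. So we run both sides on one term with holes, numbering
the occurrences of `L` that have been created so far, and average the right side over all bits of
the numbered holes. Calling hole `i` on the left costs a factor `1/2` and otherwise returns `I`;
on the right it returns `I` when the `i`-th bit is `1`, which is half of the bit-vectors.

The occurrences of hole `i` that survive such a call face `L₁` from then on, not a fresh bit. Hence
the induction must allow holes outside the set `S` of random holes, filled with `L₁` on the right.
-/

variable {ι : Type*} {M N A V : LTm} {Ns : List LTm}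

/-! ### Reduction -/

theorem IsVal.not_red (hV : IsVal V) : ¬ Red V Ns := by
  cases hV
  nofun

theorem Red.deterministic (h : Red M Ns) {Ns' : List LTm} (h' : Red M Ns') : Ns = Ns' := by
  induction h generalizing Ns' with
  | beta hV =>
    cases h' with
    | beta => rfl
    | appL _ h => exact absurd h (IsVal.lam _).not_red
    | appR _ h => exact absurd h hV.not_red
  | choice => cases h'; rfl
  | appL _ h ih =>
    cases h' with
    | beta => exact absurd h (IsVal.lam _).not_red
    | appL _ h' => rw [ih h']
    | appR hV => exact absurd h hV.not_red
  | appR hV h ih =>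
    cases h' with
    | beta hW => exact absurd h hW.not_red
    | appL _ h' => exact absurd h' hV.not_red
    | appR _ h' => rw [ih h']

theorem subst_eq_self_of_closedUnder {j k : ℕ} (hM : ClosedUnder k M) (hjk : k ≤ j) (s : LTm) :
    subst M j s = M := by
  induction M generalizing j k with
  | var n =>
    have hn : n < k := hM
    simp only [subst, if_neg (show n ≠ j by omega), if_neg (show ¬ j < n by omega)]
  | lam A ih => rw [subst, ih hM (by omega)]
  | app A B ihA ihB => rw [subst, ihA hM.1 hjk, ihB hM.2 hjk]
  | choice A B ihA ihB => rw [subst, ihA hM.1 hjk, ihB hM.2 hjk]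

theorem Red.beta_of_closedUnder (hA : ClosedUnder 0 A) (hV : IsVal V) :
    Red (.app (.lam A) V) [A] := by
  simpa only [subst_eq_self_of_closedUnder hA le_rfl] using Red.beta (M := A) hV

theorem closedUnder_Om (k : ℕ) : ClosedUnder k Om := by simp [Om, ClosedUnder]

theorem closedUnder_Idt (k : ℕ) : ClosedUnder k Idt := by simp [Idt, ClosedUnder]

theorem red_Om : Red Om [Om] := .beta (.lam _)

/-- A term that is neither a value nor reducible. -/
structure Stuck (M : LTm) : Prop where
  not_isVal : ¬ IsVal M
  not_red (Ns : List LTm) : ¬ Red M Ns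

theorem stuck_var (n : ℕ) : Stuck (.var n) := ⟨nofun, nofun⟩

theorem Stuck.appL (hM : Stuck M) (N : LTm) : Stuck (.app M N) := by
  refine ⟨nofun, fun Ns h => ?_⟩
  cases h with
  | beta => exact hM.not_isVal (.lam _)
  | appL _ h => exact hM.not_red _ h
  | appR hV => exact hM.not_isVal hV

theorem Stuck.appR (hV : IsVal V) (hM : Stuck M) : Stuck (.app V M) := by
  refine ⟨nofun, fun Ns h => ?_⟩
  cases h with
  | beta hW => exact hM.not_isVal hW
  | appL _ h => exact hV.not_red h
  | appR _ h => exact hM.not_red _ h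

/-! ### Convergence within a number of steps -/

open Classical in
/-- The probability that `M` reaches a value in fewer than `k` reduction steps; the choice of the
reduct sequence is immaterial by `Red.deterministic`. -/
noncomputable def termProb : ℕ → LTm → ℝ≥0∞
  | 0, _ => 0
  | k + 1, M =>
    if h : ∃ Ns, Red M Ns then
      (h.choose.length : ℝ≥0∞)⁻¹ * ∑ i : Fin h.choose.length, termProb k (h.choose.get i)
    else if IsVal M then 1 else 0

@[simp]
theorem termProb_zero (M : LTm) : termProb 0 M = 0 := rfl

theorem termProb_succ_of_red (h : Red M Ns) (k : ℕ) :
    termProb (k + 1) M = (Ns.length : ℝ≥0∞)⁻¹ * ∑ i : Fin Ns.length, termProb k (Ns.get i) := by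
  have hex : ∃ Ns, Red M Ns := ⟨Ns, h⟩
  obtain rfl : hex.choose = Ns := hex.choose_spec.deterministic h
  rw [termProb, dif_pos hex]

theorem termProb_succ_of_isVal (hV : IsVal V) (k : ℕ) : termProb (k + 1) V = 1 := by
  rw [termProb, dif_neg fun ⟨_, h⟩ => hV.not_red h, if_pos hV]

theorem termProb_of_stuck (hM : Stuck M) (k : ℕ) : termProb k M = 0 := by
  cases k with
  | zero => rfl
  | succ k => rw [termProb, dif_neg fun ⟨_, h⟩ => hM.not_red _ h, if_neg hM.not_isVal]

theorem termProb_succ_of_red_singleton (h : Red M [N]) (k : ℕ) :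
    termProb (k + 1) M = termProb k N := by
  simp [termProb_succ_of_red h]

theorem termProb_succ_of_red_pair {N' : LTm} (h : Red M [N, N']) (k : ℕ) :
    termProb (k + 1) M = 2⁻¹ * (termProb k N + termProb k N') := by
  simp [termProb_succ_of_red h]

theorem termProb_of_red_self (h : Red M [M]) (k : ℕ) : termProb k M = 0 := by
  induction k with
  | zero => rfl
  | succ k ih => rw [termProb_succ_of_red_singleton h, ih]

theorem isVal_or_red_or_stuck (M : LTm) : IsVal M ∨ (∃ Ns, Red M Ns) ∨ Stuck M := by
  by_cases hM : IsVal M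
  · exact .inl hM
  · by_cases h : ∃ Ns, Red M Ns
    · exact .inr (.inl h)
    · exact .inr (.inr ⟨hM, not_exists.1 h⟩)

theorem termProb_le_succ (k : ℕ) (M : LTm) : termProb k M ≤ termProb (k + 1) M := by
  induction k generalizing M with
  | zero => exact zero_le
  | succ k ih =>
    rcases isVal_or_red_or_stuck M with hM | ⟨Ns, h⟩ | hM
    · simp only [termProb_succ_of_isVal hM, le_refl]
    · rw [termProb_succ_of_red h, termProb_succ_of_red h]
      gcongr
      exact ih _
    · simp only [termProb_of_stuck hM, le_refl]

theorem termProb_mono (M : LTm) : Monotone (termProb · M) :=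
  monotone_nat_of_le_succ (termProb_le_succ · M)

theorem two_inv_mul_two_pow_card_le_card_erase {α : Type*} [DecidableEq α] (S : Finset α) (a : α) :
    (2⁻¹ : ℝ≥0∞) * 2 ^ S.card ≤ 2 ^ (S.erase a).card := by
  rw [ENNReal.inv_mul_le_iff two_ne_zero ENNReal.ofNat_ne_top, ← pow_succ']
  exact pow_le_pow_right₀ one_le_two (Nat.sub_le_iff_le_add.1 Finset.pred_card_le_card_erase)

theorem tsum_mul_sum {α κ : Type*} (s : Finset κ) (c : ℝ≥0∞) (D : κ → α → ℝ≥0∞) :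
    ∑' a, c * ∑ i ∈ s, D i a = c * ∑ i ∈ s, ∑' a, D i a := by
  rw [ENNReal.tsum_mul_left, Summable.tsum_finsetSum fun _ _ => ENNReal.summable]

theorem conv_zero (M : LTm) : Conv M 0 := ⟨0, .empty M, by simp⟩

theorem conv_one_of_isVal (hV : IsVal V) : Conv V 1 := ⟨_, .val hV, tsum_ite_eq V _⟩

theorem Conv.of_red (h : Red M Ns) {p : Fin Ns.length → ℝ≥0∞}
    (hp : ∀ i, Conv (Ns.get i) (p i)) : Conv M ((Ns.length : ℝ≥0∞)⁻¹ * ∑ i, p i) := by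
  choose D hD hDp using hp
  let D' : ℕ → LTm → ℝ≥0∞ := fun n => if hn : n < Ns.length then D ⟨n, hn⟩ else 0
  have hD' (i : Fin Ns.length) : D' i = D i := dif_pos i.isLt
  refine ⟨_, .step (D := D') h fun i => (hD' i).symm ▸ hD i, ?_⟩
  simp only [hD', tsum_mul_sum, hDp]

theorem conv_termProb (k : ℕ) (M : LTm) : Conv M (termProb k M) := by
  induction k generalizing M with
  | zero => exact conv_zero M
  | succ k ih =>
    rcases isVal_or_red_or_stuck M with hM | ⟨Ns, h⟩ | hM
    · exact (termProb_succ_of_isVal hM k).symm ▸ conv_one_of_isVal hM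
    · exact (termProb_succ_of_red h k).symm ▸ .of_red h fun _ => ih _
    · exact (termProb_of_stuck hM _).symm ▸ conv_zero M

theorem SEval.exists_tsum_le_termProb {D : LTm → ℝ≥0∞} (h : SEval M D) :
    ∃ k, ∑' V, D V ≤ termProb k M := by
  induction h with
  | empty => exact ⟨0, by simp⟩
  | @val V hV => exact ⟨1, by rw [termProb_succ_of_isVal hV, tsum_ite_eq]⟩
  | step h _ ih =>
    choose k hk using ih
    refine ⟨Finset.univ.sup k + 1, ?_⟩
    rw [termProb_succ_of_red h, tsum_mul_sum]
    gcongr with i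
    exact (hk i).trans (termProb_mono _ (Finset.le_sup (Finset.mem_univ i)))

theorem Conv.exists_le_termProb {p : ℝ≥0∞} (h : Conv M p) : ∃ k, p ≤ termProb k M := by
  obtain ⟨D, hD, rfl⟩ := h
  exact hD.exists_tsum_le_termProb

/-! ### Terms with holes -/

/-- Terms with holes named by `ι`, each to be filled with a closed value. Holes are constants, not
variables: `Template.subst` never touches them. -/
inductive Template (ι : Type*) : Type _
  | var (n : ℕ)
  | lam (T : Template ι)
  | app (T U : Template ι)
  | choice (T U : Template ι)
  | hole (i : ι)

namespace Template

/-- The term obtained by filling every hole `i` with `ρ i`. -/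
def fill (ρ : ι → LTm) : Template ι → LTm
  | var n => .var n
  | lam T => .lam (T.fill ρ)
  | app T U => .app (T.fill ρ) (U.fill ρ)
  | choice T U => .choice (T.fill ρ) (U.fill ρ)
  | hole i => ρ i

/-- Substitution for the variable `k`, mirroring `LamPlus.subst`. -/
def subst : Template ι → ℕ → Template ι → Template ι
  | var n, k, V => if n = k then V else if k < n then var (n - 1) else var n
  | lam T, k, V => lam (T.subst (k + 1) V)
  | app T U, k, V => app (T.subst k V) (U.subst k V)
  | choice T U, k, V => choice (T.subst k V) (U.subst k V)
  | hole i, _, _ => hole i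

/-- Iterated substitution for the variable `0`, mirroring `LamPlus.msubst`. -/
def msubst : Template ι → List (Template ι) → Template ι
  | T, [] => T
  | T, V :: Vs => (T.subst 0 V).msubst Vs

/-- A term seen as a template without holes. -/
def ofTerm : LTm → Template ι
  | .var n => var n
  | .lam M => lam (ofTerm M)
  | .app M N => app (ofTerm M) (ofTerm N)
  | .choice M N => choice (ofTerm M) (ofTerm N)

theorem fill_ofTerm (ρ : ι → LTm) (M : LTm) : (ofTerm M).fill ρ = M := by
  induction M with
  | var n => rfl
  | lam M ih => rw [ofTerm, fill, ih]
  | app M N ihM ihN => rw [ofTerm, fill, ihM, ihN]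
  | choice M N ihM ihN => rw [ofTerm, fill, ihM, ihN]

theorem fill_subst {ρ : ι → LTm} (hρ : ∀ i, ClosedUnder 0 (ρ i)) (T : Template ι) (k : ℕ)
    (V : Template ι) : (T.subst k V).fill ρ = LamPlus.subst (T.fill ρ) k (V.fill ρ) := by
  induction T generalizing k with
  | var n =>
    simp only [subst, fill, LamPlus.subst]
    split_ifs <;> rfl
  | lam T ih => simp only [subst, fill, LamPlus.subst, ih]
  | app T U ihT ihU => simp only [subst, fill, LamPlus.subst, ihT, ihU]
  | choice T U ihT ihU => simp only [subst, fill, LamPlus.subst, ihT, ihU]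
  | hole i => exact (subst_eq_self_of_closedUnder (hρ i) k.zero_le _).symm

theorem fill_msubst {ρ : ι → LTm} (hρ : ∀ i, ClosedUnder 0 (ρ i)) (T : Template ι)
    (Vs : List (Template ι)) :
    (T.msubst Vs).fill ρ = LamPlus.msubst (T.fill ρ) (Vs.map (fill ρ)) := by
  induction Vs generalizing T with
  | nil => rfl
  | cons V Vs ih => rw [msubst, ih, fill_subst hρ, List.map_cons, LamPlus.msubst]

/-- Templates that become values once their holes are filled with values. -/
inductive IsVal : Template ι → Prop
  | lam (T) : IsVal (lam T)
  | hole (i) : IsVal (hole i)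

theorem IsVal.fill {ρ : ι → LTm} (hρ : ∀ i, LamPlus.IsVal (ρ i)) {V : Template ι}
    (hV : V.IsVal) : LamPlus.IsVal (V.fill ρ) := by
  cases hV with
  | lam T => exact .lam _
  | hole i => exact hρ i

section Holes

variable [DecidableEq ι]

/-- The names of the holes of a template. -/
def holes : Template ι → Finset ι
  | var _ => ∅
  | lam T => T.holes
  | app T U => T.holes ∪ U.holes
  | choice T U => T.holes ∪ U.holes
  | hole i => {i}

theorem fill_congr {ρ ρ' : ι → LTm} {T : Template ι} (h : ∀ i ∈ T.holes, ρ i = ρ' i) :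
    T.fill ρ = T.fill ρ' := by
  induction T with
  | var n => rfl
  | lam T ih => rw [fill, fill, ih h]
  | app T U ihT ihU =>
    rw [holes, Finset.forall_mem_union] at h
    rw [fill, fill, ihT h.1, ihU h.2]
  | choice T U ihT ihU =>
    rw [holes, Finset.forall_mem_union] at h
    rw [fill, fill, ihT h.1, ihU h.2]
  | hole i => exact h i (Finset.mem_singleton_self i)

end Holes

/-- Call-by-value evaluation contexts over templates. -/
inductive Ctx (ι : Type*) : Type _
  | here
  | appL (C : Ctx ι) (U : Template ι)
  | appR (V : Template ι) (hV : V.IsVal) (C : Ctx ι)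

namespace Ctx

/-- The template `C[T]`. -/
def plug : Ctx ι → Template ι → Template ι
  | here, T => T
  | appL C U, T => app (C.plug T) U
  | appR V _ C, T => app V (C.plug T)

/-- The evaluation context over terms obtained by filling every hole `i` with `ρ i`, as a
function. -/
def fill (ρ : ι → LTm) : Ctx ι → LTm → LTm
  | here, M => M
  | appL C U, M => .app (C.fill ρ M) (U.fill ρ)
  | appR V _ C, M => .app (V.fill ρ) (C.fill ρ M)

theorem fill_plug (ρ : ι → LTm) (C : Ctx ι) (T : Template ι) :
    (C.plug T).fill ρ = C.fill ρ (T.fill ρ) := by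
  induction C with
  | here => rfl
  | appL C U ih => rw [plug, Template.fill, ih, fill]
  | appR V hV C ih => rw [plug, Template.fill, ih, fill]

theorem red_fill {ρ : ι → LTm} (hρ : ∀ i, LamPlus.IsVal (ρ i)) (C : Ctx ι) (h : Red M Ns) :
    Red (C.fill ρ M) (Ns.map (C.fill ρ)) := by
  induction C with
  | here => simpa only [fill, List.map_id'] using h
  | appL C U ih => simpa only [fill, List.map_map, Function.comp_def] using ih.appL (U.fill ρ)
  | appR V hV C ih => simpa only [fill, List.map_map, Function.comp_def] using ih.appR (hV.fill hρ)

theorem stuck_fill {ρ : ι → LTm} (hρ : ∀ i, LamPlus.IsVal (ρ i)) (C : Ctx ι) (h : Stuck M) :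
    Stuck (C.fill ρ M) := by
  induction C with
  | here => exact h
  | appL C U ih => exact ih.appL _
  | appR V hV C ih => exact ih.appR (hV.fill hρ)

theorem termProb_succ_fill_plug {ρ : ι → LTm} (hρ : ∀ i, LamPlus.IsVal (ρ i)) (C : Ctx ι)
    {T U : Template ι} (h : Red (T.fill ρ) [U.fill ρ]) (k : ℕ) :
    termProb (k + 1) ((C.plug T).fill ρ) = termProb k ((C.plug U).fill ρ) := by
  rw [C.fill_plug, C.fill_plug]
  exact termProb_succ_of_red_singleton (C.red_fill hρ h) k

theorem termProb_succ_fill_plug_choice {ρ : ι → LTm} (hρ : ∀ i, LamPlus.IsVal (ρ i))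
    (C : Ctx ι) (T U : Template ι) (k : ℕ) :
    termProb (k + 1) ((C.plug (choice T U)).fill ρ) =
      2⁻¹ * (termProb k ((C.plug T).fill ρ) + termProb k ((C.plug U).fill ρ)) := by
  rw [C.fill_plug, C.fill_plug, C.fill_plug]
  exact termProb_succ_of_red_pair (C.red_fill hρ (.choice _ _)) k

/-- The names of the holes of a context. -/
def holes [DecidableEq ι] : Ctx ι → Finset ι
  | here => ∅
  | appL C U => C.holes ∪ U.holes
  | appR V _ C => V.holes ∪ C.holes

theorem fill_congr [DecidableEq ι] {ρ ρ' : ι → LTm} {C : Ctx ι}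
    (h : ∀ i ∈ C.holes, ρ i = ρ' i) : C.fill ρ = C.fill ρ' := by
  funext M
  induction C with
  | here => rfl
  | appL C U ih =>
    rw [holes, Finset.forall_mem_union] at h
    rw [fill, fill, ih h.1, Template.fill_congr h.2]
  | appR V hV C ih =>
    rw [holes, Finset.forall_mem_union] at h
    rw [fill, fill, ih h.2, Template.fill_congr h.1]

end Ctx

/-- The templates that can stand in evaluation position: redexes, and variables, on which
evaluation is stuck. -/
inductive IsActive : Template ι → Prop
  | var (n) : IsActive (var n)
  | choice (T U) : IsActive (choice T U)
  | app {V W} : V.IsVal → W.IsVal → IsActive (app V W)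

theorem isVal_or_exists_plug (T : Template ι) :
    T.IsVal ∨ ∃ (C : Ctx ι) (R : Template ι), R.IsActive ∧ T = C.plug R := by
  induction T with
  | var n => exact .inr ⟨.here, _, .var n, rfl⟩
  | lam T => exact .inl (.lam T)
  | hole i => exact .inl (.hole i)
  | choice T U => exact .inr ⟨.here, _, .choice T U, rfl⟩
  | app T U ihT ihU =>
    rcases ihT with hT | ⟨C, R, hR, rfl⟩
    · rcases ihU with hU | ⟨C, R, hR, rfl⟩
      · exact .inr ⟨.here, _, .app hT hU, rfl⟩
      · exact .inr ⟨.appR T hT C, R, hR, rfl⟩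
    · exact .inr ⟨.appL C U, R, hR, rfl⟩

end Template

/-! ### The two fillings -/

/-- The left filling: the hole `none` stands for `M`, the others for copies of `L`. -/
def leftEnv : Option ℕ → LTm
  | none => Mt
  | some _ => Lt

/-- The right filling: the hole `none` stands for `N`, and `some i` for `L_{b i}`, where the bits
`b` are encoded by the set `Z` of indices where they vanish. -/
def rightEnv (Z : Finset ℕ) : Option ℕ → LTm
  | none => Nt
  | some i => if i ∈ Z then L0 else L1

theorem isVal_leftEnv : ∀ i, IsVal (leftEnv i)
  | none => .lam _
  | some _ => .lam _

theorem isVal_rightEnv (Z : Finset ℕ) : ∀ i, IsVal (rightEnv Z i)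
  | none => .lam _
  | some i => by rw [rightEnv]; split_ifs <;> exact .lam _

theorem closedUnder_leftEnv : ∀ i, ClosedUnder 0 (leftEnv i)
  | none => ⟨closedUnder_Om _, closedUnder_Idt _⟩
  | some _ => ⟨closedUnder_Om _, closedUnder_Idt _⟩

theorem closedUnder_rightEnv (Z : Finset ℕ) : ∀ i, ClosedUnder 0 (rightEnv Z i)
  | none => ⟨closedUnder_Om _, closedUnder_Idt _⟩
  | some i => by
    rw [rightEnv]
    split_ifs
    exacts [closedUnder_Om _, closedUnder_Idt _]

theorem termProb_fill_rightEnv_plug_app_none {C : Template.Ctx (Option ℕ)}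
    {W : Template (Option ℕ)} (hW : W.IsVal) {i : ℕ} {Z : Finset ℕ} (hiC : some i ∉ C.holes)
    (hiZ : i ∉ Z) (l : ℕ) :
    termProb (l + 2) ((C.plug (.app (.hole none) W)).fill (rightEnv Z)) =
      2⁻¹ * (termProb l ((C.plug (.hole (some i))).fill (rightEnv Z)) +
        termProb l ((C.plug (.hole (some i))).fill (rightEnv (insert i Z)))) := by
  have hZ := isVal_rightEnv Z
  have hcongr : C.fill (rightEnv (insert i Z)) = C.fill (rightEnv Z) := by
    refine Template.Ctx.fill_congr fun j hj => ?_
    rcases j with _ | j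
    · rfl
    · have hji : j ≠ i := by rintro rfl; exact hiC hj
      simp [rightEnv, hji]
  have hbeta : Red ((Template.app (.hole none) W).fill (rightEnv Z)) [.choice L0 L1] :=
    .beta_of_closedUnder ⟨closedUnder_Om _, closedUnder_Idt _⟩ (hW.fill hZ)
  rw [C.fill_plug, C.fill_plug, C.fill_plug, hcongr,
    termProb_succ_of_red_singleton (C.red_fill hZ hbeta),
    termProb_succ_of_red_pair (C.red_fill hZ (.choice _ _)), add_comm]
  simp [Template.fill, rightEnv, hiZ]

theorem termProb_fill_leftEnv_plug_app_some (C : Template.Ctx (Option ℕ))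
    {W : Template (Option ℕ)} (hW : W.IsVal) (i k : ℕ) :
    termProb (k + 2) ((C.plug (.app (.hole (some i)) W)).fill leftEnv) =
      2⁻¹ * termProb k ((C.plug (Template.ofTerm Idt)).fill leftEnv) := by
  have hbeta : Red ((Template.app (.hole (some i)) W).fill leftEnv)
      [(Template.choice (Template.ofTerm Om) (Template.ofTerm Idt)).fill leftEnv] :=
    .beta_of_closedUnder ⟨closedUnder_Om _, closedUnder_Idt _⟩ (hW.fill isVal_leftEnv)
  have hOm : termProb k ((C.plug (Template.ofTerm Om)).fill leftEnv) = 0 := by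
    rw [C.fill_plug, Template.fill_ofTerm]
    exact termProb_of_red_self (C.red_fill isVal_leftEnv red_Om) k
  rw [C.termProb_succ_fill_plug isVal_leftEnv hbeta,
    C.termProb_succ_fill_plug_choice isVal_leftEnv, hOm, zero_add]

theorem termProb_fill_rightEnv_plug_app_some (C : Template.Ctx (Option ℕ))
    {W : Template (Option ℕ)} (hW : W.IsVal) {i : ℕ} {Z : Finset ℕ} (hiZ : i ∉ Z) (l : ℕ) :
    termProb (l + 1) ((C.plug (.app (.hole (some i)) W)).fill (rightEnv Z)) =
      termProb l ((C.plug (Template.ofTerm Idt)).fill (rightEnv Z)) := by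
  refine C.termProb_succ_fill_plug (isVal_rightEnv Z) ?_ l
  rw [Template.fill_ofTerm, Template.fill, Template.fill, rightEnv, if_neg hiZ]
  exact .beta_of_closedUnder (closedUnder_Idt _) (hW.fill (isVal_rightEnv Z))

/-- On average over the bits of any finite set `S` of holes, the probability that the right
filling of `T` converges in fewer than `l` steps is at least the probability that the left filling
does in fewer than `k`. The holes outside `S` are filled with `L` on the left, `L₁` on the right. -/
def AvgDominated (k l : ℕ) (T : Template (Option ℕ)) : Prop :=
  ∀ S : Finset ℕ, termProb k (T.fill leftEnv) * 2 ^ S.card ≤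
    ∑ Z ∈ S.powerset, termProb l (T.fill (rightEnv Z))

namespace AvgDominated

variable {k l : ℕ} {C : Template.Ctx (Option ℕ)} {T U W : Template (Option ℕ)}

theorem mono {k' l' : ℕ} (h : AvgDominated k l T) (hk : k' ≤ k) (hl : l ≤ l') :
    AvgDominated k' l' T := fun S =>
  calc termProb k' (T.fill leftEnv) * 2 ^ S.card
      ≤ termProb k (T.fill leftEnv) * 2 ^ S.card := by gcongr; exact termProb_mono _ hk
    _ ≤ ∑ Z ∈ S.powerset, termProb l (T.fill (rightEnv Z)) := h S
    _ ≤ ∑ Z ∈ S.powerset, termProb l' (T.fill (rightEnv Z)) := by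
      gcongr; exact termProb_mono _ hl

theorem of_termProb_eq_zero (h : termProb k (T.fill leftEnv) = 0) (l : ℕ) :
    AvgDominated k l T := fun S => by
  rw [h, zero_mul]
  exact zero_le

theorem of_isVal (hT : T.IsVal) (k l : ℕ) : AvgDominated (k + 1) (l + 1) T := fun S => by
  have hright (Z : Finset ℕ) : termProb (l + 1) (T.fill (rightEnv Z)) = 1 :=
    termProb_succ_of_isVal (hT.fill (isVal_rightEnv Z)) l
  rw [termProb_succ_of_isVal (hT.fill isVal_leftEnv)]
  simp [hright]

theorem plug_var (C : Template.Ctx (Option ℕ)) (n k l : ℕ) :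
    AvgDominated k l (C.plug (.var n)) := by
  refine of_termProb_eq_zero ?_ l
  rw [C.fill_plug]
  exact termProb_of_stuck (C.stuck_fill isVal_leftEnv (stuck_var n)) k

theorem plug_choice (hT : AvgDominated k l (C.plug T)) (hU : AvgDominated k l (C.plug U)) :
    AvgDominated (k + 1) (l + 1) (C.plug (.choice T U)) := fun S => by
  simp only [C.termProb_succ_fill_plug_choice isVal_leftEnv,
    C.termProb_succ_fill_plug_choice (isVal_rightEnv _)]
  rw [← Finset.mul_sum, Finset.sum_add_distrib, mul_assoc, add_mul]
  gcongr
  exacts [hT S, hU S]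

theorem plug_beta (hW : W.IsVal) (h : AvgDominated k l (C.plug (T.subst 0 W))) :
    AvgDominated (k + 1) (l + 1) (C.plug (.app (.lam T) W)) := fun S => by
  have hred {ρ : Option ℕ → LTm} (hρ : ∀ i, IsVal (ρ i)) (hρ' : ∀ i, ClosedUnder 0 (ρ i)) :
      Red ((Template.app (.lam T) W).fill ρ) [(T.subst 0 W).fill ρ] := by
    rw [Template.fill_subst hρ']
    exact .beta (hW.fill hρ)
  simp only [C.termProb_succ_fill_plug isVal_leftEnv (hred isVal_leftEnv closedUnder_leftEnv),
    C.termProb_succ_fill_plug (isVal_rightEnv _)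
      (hred (isVal_rightEnv _) (closedUnder_rightEnv _))]
  exact h S

theorem plug_app_none (hW : W.IsVal) (h : ∀ i, AvgDominated k l (C.plug (.hole (some i)))) :
    AvgDominated (k + 1) (l + 2) (C.plug (.app (.hole none) W)) := fun S => by
  obtain ⟨i, hi⟩ := Infinite.exists_notMem_finset (S ∪ C.holes.eraseNone)
  obtain ⟨hiS, hiC⟩ : i ∉ S ∧ some i ∉ C.holes := by
    simpa only [Finset.mem_union, Finset.mem_eraseNone, not_or] using hi
  have hleft : Red ((Template.app (.hole none) W).fill leftEnv)
      [(Template.hole (some i)).fill leftEnv] :=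
    .beta_of_closedUnder (closedUnder_leftEnv (some i)) (hW.fill isVal_leftEnv)
  have hright : ∀ Z ∈ S.powerset, _ := fun Z hZ => termProb_fill_rightEnv_plug_app_none hW hiC
    (Finset.notMem_of_mem_powerset_of_notMem hZ hiS) l
  have hinsert := h i (insert i S)
  rw [Finset.sum_powerset_insert hiS, Finset.card_insert_of_notMem hiS,
    ← Finset.sum_add_distrib, pow_succ', mul_left_comm] at hinsert
  rw [C.termProb_succ_fill_plug isVal_leftEnv hleft, Finset.sum_congr rfl hright,
    ← Finset.mul_sum]
  exact (ENNReal.mul_le_iff_le_inv two_ne_zero ENNReal.ofNat_ne_top).1 hinsert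

theorem plug_app_some (hW : W.IsVal) (i : ℕ)
    (h : AvgDominated k l (C.plug (Template.ofTerm Idt))) :
    AvgDominated (k + 2) (l + 1) (C.plug (.app (.hole (some i)) W)) := fun S => by
  have hright : ∀ Z ∈ (S.erase i).powerset, _ := fun Z hZ =>
    termProb_fill_rightEnv_plug_app_some C hW
      (Finset.notMem_of_mem_powerset_of_notMem hZ (Finset.notMem_erase i S)) l
  calc termProb (k + 2) ((C.plug (.app (.hole (some i)) W)).fill leftEnv) * 2 ^ S.card
      = termProb k ((C.plug (Template.ofTerm Idt)).fill leftEnv) * (2⁻¹ * 2 ^ S.card) := by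
        rw [termProb_fill_leftEnv_plug_app_some C hW, mul_comm 2⁻¹, mul_assoc]
    _ ≤ termProb k ((C.plug (Template.ofTerm Idt)).fill leftEnv) * 2 ^ (S.erase i).card := by
        gcongr
        exact two_inv_mul_two_pow_card_le_card_erase S i
    _ ≤ ∑ Z ∈ (S.erase i).powerset,
          termProb l ((C.plug (Template.ofTerm Idt)).fill (rightEnv Z)) := h (S.erase i)
    _ = ∑ Z ∈ (S.erase i).powerset,
          termProb (l + 1) ((C.plug (.app (.hole (some i)) W)).fill (rightEnv Z)) :=
        (Finset.sum_congr rfl hright).symm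
    _ ≤ ∑ Z ∈ S.powerset,
          termProb (l + 1) ((C.plug (.app (.hole (some i)) W)).fill (rightEnv Z)) :=
        Finset.sum_le_sum_of_subset (Finset.powerset_mono.2 (Finset.erase_subset i S))

end AvgDominated

-- The factor `2` is due to the calls of `M`: one step on the left, but two on the right, where the
-- coin is tossed as well.
theorem avgDominated_two_mul (k : ℕ) (T : Template (Option ℕ)) : AvgDominated k (2 * k) T := by
  induction k generalizing T with
  | zero => exact .of_termProb_eq_zero (termProb_zero _) _
  | succ k ih =>
    rcases T.isVal_or_exists_plug with hT | ⟨C, R, hR, rfl⟩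
    · exact .of_isVal hT k _
    · cases hR with
      | var n => exact .plug_var C n _ _
      | choice T U => exact (AvgDominated.plug_choice (ih _) (ih _)).mono le_rfl (by omega)
      | app hV hW =>
        cases hV with
        | lam T => exact (AvgDominated.plug_beta hW (ih _)).mono le_rfl (by omega)
        | hole i =>
          cases i with
          | none => exact .plug_app_none hW fun _ => ih _
          | some i => exact (AvgDominated.plug_app_some hW i (ih _)).mono (by omega) (by omega)

/-! ### Bit-vectors -/

/-- The set of positions where a bit-vector vanishes. -/
def zeros {n : ℕ} (b : Fin n → Bool) : Finset ℕ :=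
  ({i | b i = false} : Finset (Fin n)).map Fin.valEmbedding

theorem mem_zeros {n : ℕ} {b : Fin n → Bool} {i : ℕ} :
    i ∈ zeros b ↔ ∃ h : i < n, b ⟨i, h⟩ = false := by
  simp [zeros, Fin.exists_iff, exists_and_left, and_comm]

theorem zeros_subset_range {n : ℕ} (b : Fin n → Bool) : zeros b ⊆ Finset.range n :=
  fun _ hi => Finset.mem_range.2 (mem_zeros.1 hi).1

theorem zeros_decide_notMem {n : ℕ} {Z : Finset ℕ} (hZ : Z ⊆ Finset.range n) :
    zeros (fun i : Fin n => decide ((i : ℕ) ∉ Z)) = Z := by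
  ext i
  have hi : i ∈ Z → i < n := fun h => Finset.mem_range.1 (hZ h)
  simpa [mem_zeros] using hi

theorem sum_powerset_range {R : Type*} [AddCommMonoid R] (n : ℕ) (f : Finset ℕ → R) :
    ∑ Z ∈ (Finset.range n).powerset, f Z = ∑ b : Fin n → Bool, f (zeros b) := by
  have hzeros : ∀ Z ∈ (Finset.range n).powerset,
      zeros (fun i : Fin n => decide ((i : ℕ) ∉ Z)) = Z :=
    fun _ hZ => zeros_decide_notMem (Finset.mem_powerset.1 hZ)
  refine Finset.sum_nbij' (fun Z i => decide ((i : ℕ) ∉ Z)) zeros (fun _ _ => Finset.mem_univ _)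
    (fun b _ => Finset.mem_powerset.2 (zeros_subset_range b)) hzeros (fun b _ => ?_)
    fun Z hZ => by rw [hzeros Z hZ]
  funext i
  simp [mem_zeros]

/-- The template of `P[·/x, ·/ȳ]`, with `x` replaced by the hole `none` and `yᵢ` by `some i`. -/
def toTemplate (n : ℕ) (P : LTm) : Template (Option ℕ) :=
  (Template.ofTerm P).msubst (.hole none :: List.ofFn fun i : Fin n => .hole (some i))

theorem fill_toTemplate {ρ : Option ℕ → LTm} (hρ : ∀ i, ClosedUnder 0 (ρ i)) (n : ℕ) (P : LTm) :
    (toTemplate n P).fill ρ = msubst P (ρ none :: List.ofFn fun i : Fin n => ρ (some i)) := by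
  rw [toTemplate, Template.fill_msubst hρ, Template.fill_ofTerm, List.map_cons, List.map_ofFn]
  rfl

theorem fill_leftEnv_toTemplate (n : ℕ) (P : LTm) :
    (toTemplate n P).fill leftEnv = msubst P (Mt :: List.replicate n Lt) := by
  rw [fill_toTemplate closedUnder_leftEnv, ← List.ofFn_const]
  rfl

theorem fill_rightEnv_zeros_toTemplate {n : ℕ} (b : Fin n → Bool) (P : LTm) :
    (toTemplate n P).fill (rightEnv (zeros b)) =
      msubst P (Nt :: List.ofFn fun i => if b i then L1 else L0) := by
  rw [fill_toTemplate (closedUnder_rightEnv _)]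
  simp only [rightEnv, mem_zeros, Fin.is_lt, Fin.eta, exists_true_left]
  congr 3
  funext i
  cases b i <;> rfl

theorem termProb_msubst_le_average (n : ℕ) (P : LTm) (k : ℕ) :
    termProb k (msubst P (Mt :: List.replicate n Lt)) ≤
      (∑ b : Fin n → Bool, termProb (2 * k)
        (msubst P (Nt :: List.ofFn fun i => if b i then L1 else L0))) / 2 ^ n := by
  rw [ENNReal.le_div_iff_mul_le (by simp) (by simp)]
  simpa only [fill_leftEnv_toTemplate, Finset.card_range, sum_powerset_range,
    fill_rightEnv_zeros_toTemplate] using avgDominated_two_mul k (toTemplate n P) (Finset.range n)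

theorem termProb_subst_le (P : LTm) (k : ℕ) :
    termProb k (subst P 0 Mt) ≤ termProb (2 * k) (subst P 0 Nt) := by
  simpa [msubst] using termProb_msubst_le_average 0 P k

theorem stmt19_general :
    (∀ (n : ℕ) (P : LTm) (p : ℝ≥0∞),
      Conv (msubst P (Mt :: List.replicate n Lt)) p →
      ∃ pb : (Fin n → Bool) → ℝ≥0∞,
        (∀ b : Fin n → Bool,
          Conv (msubst P (Nt :: List.ofFn fun i => if b i then L1 else L0)) (pb b)) ∧
        p ≤ (∑ b : Fin n → Bool, pb b) / 2 ^ n) ∧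
    (∀ (P : LTm) (p : ℝ≥0∞),
      Conv (subst P 0 Mt) p → ∃ q, p ≤ q ∧ Conv (subst P 0 Nt) q) := by
  refine ⟨fun n P p hp => ?_, fun P p hp => ?_⟩
  · obtain ⟨k, hk⟩ := hp.exists_le_termProb
    exact ⟨_, fun b => conv_termProb (2 * k) _, hk.trans (termProb_msubst_le_average n P k)⟩
  · obtain ⟨k, hk⟩ := hp.exists_le_termProb
    exact ⟨_, hk.trans (termProb_subst_le P k), conv_termProb _ _⟩

/-- if `P[M/x, L/ȳ]` converges with probability `p`, then for every
bit-vector `b ∈ {0,1}ⁿ` there is `p_b` such that `P[N/x, L_b/ȳ]` converges with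
probability `p_b` and `p ≤ (∑_b p_b) / 2ⁿ`.  In particular (`n = 0`), for every `P`
with one free variable, the convergence probability of `P[M/x]` is bounded by a
convergence probability of `P[N/x]`. -/
theorem stmt19 :
    (∀ (n : ℕ) (P : LTm), ClosedUnder (n + 1) P → ∀ p : ℝ≥0∞,
      Conv (msubst P (Mt :: List.replicate n Lt)) p →
      ∃ pb : (Fin n → Bool) → ℝ≥0∞,
        (∀ b : Fin n → Bool,
          Conv (msubst P (Nt :: List.ofFn fun i => if b i then L1 else L0)) (pb b)) ∧
        p ≤ (∑ b : Fin n → Bool, pb b) / 2 ^ n) ∧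
    (∀ P : LTm, ClosedUnder 1 P → ∀ p : ℝ≥0∞,
      Conv (subst P 0 Mt) p → ∃ q, p ≤ q ∧ Conv (subst P 0 Nt) q) :=
  ⟨fun n P _ => stmt19_general.1 n P, fun P _ => stmt19_general.2 P⟩

end LamPlus
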